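/- arXiv:2503.12333 — 3 statements merged into one kernel-verified Lean document; each statement's English description precedes it below -/
import Mathlib

section
/- Let l, v > 0, 0 < d_j < d_i, and let u' be a real number with d_i·v/(l + d_j) < u' ≤ v. Let s : ℝ → ℝ be a continuous speed function with u' ≤ s(τ) ≤ v for all τ ∈ [0, d_i/u'], and define the follower's front position x(t) = −d_i + ∫₀ᵗ s(τ) dτ. Then there exists a time t with d_j/v < t < (d_j + l)/v and x(t) = 0; that is, the follower's front crosses Q at a time when the leader occupies Q. -/
/-!
To travel a distance `d` at a speed between `u` and `v` takes a time between `d / v` and `d / u`.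
The follower thus reaches `Q` between `dᵢ / v`, which is after the leader's entry `dⱼ / v`, and
`dᵢ / u'`, which is before the leader's exit `(dⱼ + l) / v` because `u'` exceeds the speed
`dᵢ v / (l + dⱼ)` that would bring the follower to `Q` exactly at that exit.
-/

open MeasureTheory Set

section IntervalIntegral

variable {f : ℝ → ℝ} {a b c : ℝ}

theorem sub_mul_le_intervalIntegral_of_ae_le (hab : a ≤ b) (hf : IntervalIntegrable f volume a b)
    (hcf : ∀ᵐ x ∂volume.restrict (Icc a b), c ≤ f x) : (b - a) * c ≤ ∫ x in a..b, f x := by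
  simpa only [intervalIntegral.integral_const, smul_eq_mul] using
    intervalIntegral.integral_mono_ae_restrict hab intervalIntegrable_const hf hcf

theorem intervalIntegral_le_sub_mul_of_ae_le (hab : a ≤ b) (hf : IntervalIntegrable f volume a b)
    (hfc : ∀ᵐ x ∂volume.restrict (Icc a b), f x ≤ c) : ∫ x in a..b, f x ≤ (b - a) * c := by
  simpa only [intervalIntegral.integral_const, smul_eq_mul] using
    intervalIntegral.integral_mono_ae_restrict hab hf intervalIntegrable_const hfc

theorem exists_mem_uIcc_intervalIntegral_eq {μ : Measure ℝ} [NullSingletonClass μ]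
    (hf : IntervalIntegrable f μ a b) (hc : c ∈ uIcc 0 (∫ x in a..b, f x ∂μ)) :
    ∃ t ∈ uIcc a b, ∫ x in a..t, f x ∂μ = c := by
  refine intermediate_value_uIcc
    (intervalIntegral.continuousOn_primitive_interval' hf left_mem_uIcc) ?_
  rwa [intervalIntegral.integral_same]

end IntervalIntegral

theorem exists_travel_time_mem_Icc {s : ℝ → ℝ} {u v d : ℝ} (hu : 0 < u) (hv : 0 < v) (hd : 0 ≤ d)
    (hs : IntervalIntegrable s volume 0 (d / u))
    (hsb : ∀ᵐ τ ∂volume.restrict (Icc 0 (d / u)), u ≤ s τ ∧ s τ ≤ v) :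
    ∃ t ∈ Icc (d / v) (d / u), ∫ τ in (0 : ℝ)..t, s τ = d := by
  have hT : 0 ≤ d / u := by positivity
  have distance_le : d ≤ ∫ τ in (0 : ℝ)..d / u, s τ := by
    simpa only [sub_zero, div_mul_cancel₀ d hu.ne'] using
      sub_mul_le_intervalIntegral_of_ae_le hT hs (hsb.mono fun _ h ↦ h.1)
  obtain ⟨t, ht, hst⟩ := exists_mem_uIcc_intervalIntegral_eq hs (Icc_subset_uIcc ⟨hd, distance_le⟩)
  rw [uIcc_of_le hT] at ht
  have hst_le : ∫ τ in (0 : ℝ)..t, s τ ≤ (t - 0) * v :=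
    intervalIntegral_le_sub_mul_of_ae_le ht.1
      (hs.mono_set (uIcc_subset_uIcc_left (Icc_subset_uIcc ht)))
      (ae_restrict_of_ae_restrict_of_subset (Icc_subset_Icc_right ht.2) (hsb.mono fun _ h ↦ h.2))
  rw [hst, sub_zero] at hst_le
  exact ⟨t, ⟨(div_le_iff₀ hv).2 hst_le, ht.2⟩, hst⟩

theorem fast_speed_profile_crosses_during_occupancy_general
    {l v dj di u' : ℝ} (hl : 0 < l) (hv : 0 < v) (hdj : 0 < dj) (hdij : dj < di)
    (hu' : di * v / (l + dj) < u') {s : ℝ → ℝ}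
    (hs : IntervalIntegrable s volume 0 (di / u'))
    (hsb : ∀ᵐ τ ∂volume.restrict (Icc 0 (di / u')), u' ≤ s τ ∧ s τ ≤ v)
    {x : ℝ → ℝ} (hx : ∀ t, x t = -di + ∫ τ in (0 : ℝ)..t, s τ) :
    ∃ t : ℝ, dj / v < t ∧ t < (dj + l) / v ∧ x t = 0 := by
  have hdi : 0 < di := hdj.trans hdij
  have hu'_pos : 0 < u' := lt_trans (by positivity) hu'
  obtain ⟨t, ⟨hvt, htu⟩, hst⟩ := exists_travel_time_mem_Icc hu'_pos hv hdi.le hs hsb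
  have entry_lt : dj / v < di / v := div_lt_div_of_pos_right hdij hv
  have lt_exit : di / u' < (dj + l) / v := by
    rwa [div_lt_div_iff₀ hu'_pos hv, add_comm dj l, ← div_lt_iff₀' (by positivity)]
  exact ⟨t, entry_lt.trans_le hvt, htu.trans_lt lt_exit, by rw [hx, hst, neg_add_cancel]⟩

open intervalIntegral in
/-- Let `u'` satisfy `d_i·v/(l+d_j) < u' ≤ v`, and let the follower move with a
continuous speed profile `s` with `u' ≤ s(τ) ≤ v` on `[0, d_i/u']`, so its
front position is `x(t) = −d_i + ∫₀ᵗ s`. Then the follower's front crosses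
`Q = 0` at some time strictly within the leader's occupancy window
`(d_j/v, (d_j+l)/v)`. -/
theorem fast_speed_profile_crosses_during_occupancy
    (l v dj di u' : ℝ) (hl : 0 < l) (hv : 0 < v)
    (hdj : 0 < dj) (hdij : dj < di)
    (hu'₁ : di * v / (l + dj) < u') (hu'₂ : u' ≤ v)
    (s : ℝ → ℝ) (hs : Continuous s)
    (hsb : ∀ τ ∈ Set.Icc (0 : ℝ) (di / u'), u' ≤ s τ ∧ s τ ≤ v)
    (x : ℝ → ℝ) (hx : ∀ t, x t = -di + ∫ τ in (0 : ℝ)..t, s τ) :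
    ∃ t : ℝ, dj / v < t ∧ t < (dj + l) / v ∧ x t = 0 :=
  fast_speed_profile_crosses_during_occupancy_general hl hv hdj hdij hu'₁
    (hs.intervalIntegrable 0 _) (ae_restrict_of_forall_mem measurableSet_Icc hsb) hx
end

section
/- Let l, v > 0 and 0 < d_j < d_i < d_j + l, and set u = d_i·v/(l + d_j) and t* = (l + d_j)/v. Let s : ℝ → ℝ be a continuous speed function with 0 ≤ s(τ) ≤ v for all τ ∈ [0, t*], and define x(t) = −d_i + ∫₀ᵗ s(τ) dτ. If the follower's front does not pass Q before the leader clears it, i.e., x(t) ≤ 0 for all t ∈ [0, t*], then the minimum of s over [0, t*] is at most u. Hence Strategy 1, whose follower moves at the constant speed u on [0, t*], maximizes the minimum speed among all collision-free follower speed profiles (it is minimally invasive). -/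
/-!
The Strategy 1 speed `u` equals `d_i / t*`, the average speed that brings the follower's front
exactly to `Q` at time `t*`. A profile that has not passed `Q` at time `t*` has at most this
average over `[0, t*]`, and no function exceeds its average everywhere.
-/

theorem exists_mem_uIoc_le_interval_average {f : ℝ → ℝ} {a b : ℝ} (hab : a ≠ b)
    (hf : IntervalIntegrable f MeasureTheory.volume a b) :
    ∃ x ∈ Set.uIoc a b, f x ≤ ⨍ y in a..b, f y :=
  MeasureTheory.exists_le_setAverage (by simp [sub_ne_zero, hab.symm]) (by simp) hf.def'

theorem strategy1_maximizes_min_speed_general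
    (l v dj di : ℝ) (hldj : 0 < l + dj) (hv : 0 < v)
    (u tstar : ℝ) (hu : u = di * v / (l + dj)) (htstar : tstar = (l + dj) / v)
    (s : ℝ → ℝ) (hs : IntervalIntegrable s MeasureTheory.volume 0 tstar)
    (x : ℝ → ℝ) (hx : ∀ t, x t = -di + ∫ τ in (0 : ℝ)..t, s τ)
    (hsafe : x tstar ≤ 0) :
    ∃ τ ∈ Set.Icc (0 : ℝ) tstar, s τ ≤ u := by
  have htstar_pos : 0 < tstar := htstar ▸ div_pos hldj hv
  have hdist : ∫ τ in (0 : ℝ)..tstar, s τ ≤ di := by linarith [hx tstar]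
  have havg : ⨍ τ in (0 : ℝ)..tstar, s τ ≤ u := calc
    ⨍ τ in (0 : ℝ)..tstar, s τ = (∫ τ in (0 : ℝ)..tstar, s τ) / tstar := by
      rw [interval_average_eq_div, sub_zero]
    _ ≤ di / tstar := by gcongr
    _ = u := by rw [hu, htstar, div_div_eq_mul_div]
  obtain ⟨τ, hτ, hsτ⟩ := exists_mem_uIoc_le_interval_average htstar_pos.ne hs
  rw [Set.uIoc_of_le htstar_pos.le] at hτ
  exact ⟨τ, Set.Ioc_subset_Icc_self hτ, hsτ.trans havg⟩

open intervalIntegral in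
/-- If a continuous follower speed profile `s` with `0 ≤ s(τ) ≤ v` on `[0, t*]`
(where `t* = (l+d_j)/v`) is collision-free, i.e. the follower's front
`x(t) = −d_i + ∫₀ᵗ s` satisfies `x(t) ≤ 0` on `[0, t*]`, then the minimum of
`s` on `[0, t*]` is at most the Strategy-1 speed `u = d_i·v/(l+d_j)`: some
point of `[0, t*]` has `s ≤ u`.  Hence Strategy 1 maximizes the minimum speed
among collision-free follower profiles (it is minimally invasive). -/
theorem strategy1_maximizes_min_speed
    (l v dj di : ℝ) (hl : 0 < l) (hv : 0 < v)
    (hdj : 0 < dj) (hdij : dj < di) (hdil : di < dj + l)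
    (u tstar : ℝ) (hu : u = di * v / (l + dj)) (htstar : tstar = (l + dj) / v)
    (s : ℝ → ℝ) (hs : Continuous s)
    (hsb : ∀ τ ∈ Set.Icc (0 : ℝ) tstar, 0 ≤ s τ ∧ s τ ≤ v)
    (x : ℝ → ℝ) (hx : ∀ t, x t = -di + ∫ τ in (0 : ℝ)..t, s τ)
    (hsafe : ∀ t ∈ Set.Icc (0 : ℝ) tstar, x t ≤ 0) :
    ∃ τ ∈ Set.Icc (0 : ℝ) tstar, s τ ≤ u :=
  strategy1_maximizes_min_speed_general l v dj di (add_pos hl hdj) hv u tstar hu htstar s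
    (hs.intervalIntegrable 0 tstar) x hx (hsafe tstar ⟨by rw [htstar]; positivity, le_rfl⟩)
end

section
/- Let l, v, d_i, d_j > 0 and g > 0, and set t* = (l + d_j)/v. Let x : ℝ → ℝ be Lipschitz with constant v on [0, T] with T ≥ 0, x(0) = −d_i, x(T) = g, and suppose x(t) ≤ 0 for all t ∈ [0, min(T, t*)] (the follower does not pass Q before the leader clears it). Then T ≥ t* + g/v; that is, any collision-avoiding follower trajectory reaches the goal no sooner than time (l + d_j)/v + g/v. -/
lemma lt_of_forall_mem_Icc_min_le {α β : Type*} [LinearOrder α] [Preorder β] {f : α → β}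
    {a b s : α} {c : β} (hab : a ≤ b) (hle : ∀ t ∈ Set.Icc a (min b s), f t ≤ c)
    (hc : c < f b) : s < b := by
  by_contra! hbs
  exact (hle b ⟨hab, le_min le_rfl hbs⟩).not_gt hc

lemma sub_div_le_dist_of_lipschitzOnWith {α : Type*} [PseudoMetricSpace α] {K : NNReal}
    {f : α → ℝ} {S : Set α} (hf : LipschitzOnWith K f S) {p q : α} (hp : p ∈ S) (hq : q ∈ S) :
    (f p - f q) / K ≤ dist p q := by
  refine div_le_of_le_mul₀ K.coe_nonneg dist_nonneg ?_
  rw [mul_comm, sub_le_iff_le_add']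
  exact hf.le_add_mul hp hq

lemma add_sub_div_le_of_lipschitzOnWith_of_le {K : NNReal} {f : ℝ → ℝ} {a b s c : ℝ}
    (hab : a ≤ b) (has : a ≤ s) (hf : LipschitzOnWith K f (Set.Icc a b))
    (hle : ∀ t ∈ Set.Icc a (min b s), f t ≤ c) (hc : c < f b) :
    s + (f b - c) / K ≤ b := by
  have hsb : s < b := lt_of_forall_mem_Icc_min_le hab hle hc
  have hfs : f s ≤ c := hle s ⟨has, le_min hsb.le le_rfl⟩
  have htravel : (f b - c) / K ≤ b - s :=
    calc (f b - c) / K ≤ (f b - f s) / K := by gcongr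
      _ ≤ dist b s := sub_div_le_dist_of_lipschitzOnWith hf ⟨hab, le_rfl⟩ ⟨has, hsb.le⟩
      _ = b - s := by rw [Real.dist_eq, abs_of_pos (sub_pos.2 hsb)]
  linarith

/-- Any collision-avoiding follower trajectory `x` (Lipschitz with constant `v`
on `[0, T]`, starting at `−d_i`, ending at the goal `g > 0`, and staying `≤ 0`
until the leader clears `Q` at time `t* = (l+d_j)/v`) reaches the goal no
sooner than `t* + g/v`. -/
theorem follower_goal_time_lower_bound
    (l v di dj g : ℝ) (hl : 0 < l) (hv : 0 < v)
    (hdi : 0 < di) (hdj : 0 < dj) (hg : 0 < g)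
    (T : ℝ) (hT : 0 ≤ T)
    (x : ℝ → ℝ)
    (hlip : LipschitzOnWith (Real.toNNReal v) x (Set.Icc 0 T))
    (hx0 : x 0 = -di) (hxT : x T = g)
    (hsafe : ∀ t ∈ Set.Icc (0 : ℝ) (min T ((l + dj) / v)), x t ≤ 0) :
    T ≥ (l + dj) / v + g / v := by
  have hclear : 0 ≤ (l + dj) / v := by positivity
  have harrival := add_sub_div_le_of_lipschitzOnWith_of_le hT hclear hlip hsafe (hxT ▸ hg)
  rwa [hxT, sub_zero, Real.coe_toNNReal v hv.le] at harrival
end
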